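/- Assume (A(t), B(t)) is totally controllable on [0,1]. Let s ∈ [0,1] and let Π_s be a symmetric n×n matrix. Then the Riccati equation Π'(t) = −A(t)ᵀΠ − ΠA(t) + ΠB(t)B(t)ᵀΠ − Q(t) has a (necessarily unique) solution Π on [0,1] with Π(s) = Π_s if and only if: (i) −Φ₁₂(0,s)⁻¹Φ₁₁(0,s) ≺ Π_s whenever s > 0, and (ii) Π_s ≺ −Φ₁₂(1,s)⁻¹Φ₁₁(1,s) whenever s < 1. In that case the solution is given by Π(t) = (Φ₂₁(t,s) + Φ₂₂(t,s)Π_s)(Φ₁₁(t,s) + Φ₁₂(t,s)Π_s)⁻¹, and for every t ∈ (0,1) one has −Φ₁₂(0,t)⁻¹Φ₁₁(0,t) ≺ Π(t) ≺ −Φ₁₂(1,t)⁻¹Φ₁₁(1,t). -/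

import Mathlib

open Matrix

/-- `IsSTM F Φ`: `Φ` is the state transition matrix of `F`, i.e. for each fixed `s`,
`t ↦ Φ t s` solves `X' = F t * X`, `X s = 1` (derivatives taken entrywise). -/
def IsSTM {ι : Type*} [Fintype ι] [DecidableEq ι] (F : ℝ → Matrix ι ι ℝ)
    (Φ : ℝ → ℝ → Matrix ι ι ℝ) : Prop :=
  (∀ s : ℝ, Φ s s = 1) ∧
  ∀ (s t : ℝ) (i j : ι), HasDerivAt (fun t' : ℝ => Φ t' s i j) ((F t * Φ t s) i j) t

/-- `IsCtrbMatSeq A B Γ`: `Γ 0 = B` and `Γ k = -A Γ (k-1) + Γ' (k-1)` for `1 ≤ k ≤ n`,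
i.e. the derivative of each entry of `Γ k` is the corresponding entry of `Γ (k+1) + A * Γ k`,
for `k < n`. -/
def IsCtrbMatSeq {n p : ℕ} (A : ℝ → Matrix (Fin n) (Fin n) ℝ)
    (B : ℝ → Matrix (Fin n) (Fin p) ℝ) (Γ : ℕ → ℝ → Matrix (Fin n) (Fin p) ℝ) : Prop :=
  Γ 0 = B ∧
  ∀ k < n, ∀ (t : ℝ) (i : Fin n) (j : Fin p),
    HasDerivAt (fun τ : ℝ => Γ k τ i j) ((Γ (k + 1) t + A t * Γ k t) i j) t

/-- The controllability matrix `Θₙ(t) = [Γ₀(t) Γ₁(t) ⋯ Γ_{n−1}(t)]`. -/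
def ctrbMat {n p : ℕ} (Γ : ℕ → ℝ → Matrix (Fin n) (Fin p) ℝ) (t : ℝ) :
    Matrix (Fin n) (Fin n × Fin p) ℝ :=
  Matrix.of fun i kj => Γ (kj.1 : ℕ) t i kj.2

/-- Total controllability of `(A(t), B(t))` on `[0,1]`. -/
def TotallyControllable {n p : ℕ} (Γ : ℕ → ℝ → Matrix (Fin n) (Fin p) ℝ) : Prop :=
  ∀ t₀ t₁ : ℝ, 0 ≤ t₀ → t₀ < t₁ → t₁ ≤ 1 →
    ∃ t ∈ Set.Ioo t₀ t₁, (ctrbMat Γ t).rank = n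


/-- `P` solves the Riccati equation `P' = -AᵀP - PA + PBBᵀP - Q` on the set `S`
(derivatives taken entrywise, within `S`). -/
def IsRiccatiSolOn {n p : ℕ} (A Q : ℝ → Matrix (Fin n) (Fin n) ℝ)
    (B : ℝ → Matrix (Fin n) (Fin p) ℝ) (P : ℝ → Matrix (Fin n) (Fin n) ℝ)
    (S : Set ℝ) : Prop :=
  ∀ t ∈ S, ∀ (i j : Fin n),
    HasDerivWithinAt (fun τ : ℝ => P τ i j)
      ((-(A t)ᵀ * P t - P t * A t + P t * (B t * (B t)ᵀ) * P t - Q t) i j) S t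

/-!
Write `(x, y)` for a trajectory of the Hamiltonian system. Along it
`(x ⬝ y)' = -|Bᵀ y|² - x ⬝ Q x ≤ 0`, and the symplectic form `x ⬝ y₁ - y ⬝ x₁` of two trajectories
is constant in time.

If `x` vanishes at two times, then `Bᵀ y = 0` between them, so `x' = A x` forces `x = 0` and
`y' = -Aᵀ y`. Differentiating `Bᵀ y = 0` repeatedly gives `Γ_kᵀ y = 0` for `k ≤ n`, so `y` vanishes
wherever the controllability matrix has rank `n`, hence identically. Thus `Φ₁₂(e, s)` is invertible
for `e ≠ s`, and `K_e(s) = -Φ₁₂(e, s)⁻¹ Φ₁₁(e, s)` is the symmetric matrix such that the trajectory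
through `(v, K_e(s) v)` at time `s` has state `0` at time `e`.

Let `P` solve the Riccati equation. The defect `z = y - P x` of a trajectory solves the homogeneous
linear equation `z' = (P B Bᵀ - Aᵀ) z`. Hence `y = P x` persists once it holds, which gives the
linear fractional formula, and `(x ⬝ z)' = -|Bᵀ z|²`. Along the trajectory with `y(s) = K_e(s) x(s)`
the function `x ⬝ z` vanishes at time `e` and equals `v ⬝ (K_e(s) - P(s)) v` at time `s`, so
monotonicity gives the two strict inequalities.

Conversely, suppose that the inequalities hold at time `s` and that `Φ₁₁(t, s) + Φ₁₂(t, s) P_s`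
kills `v`. The trajectory through `(v, P_s v)` has state `0` at time `t`, between `s` and the
endpoint `e`. Subtracting the trajectory through `(v, K_e(s) v)` and using the monotonicity of
`x ⬝ y` together with the symplectic form compares `v ⬝ P_s v` with `v ⬝ K_e(s) v` in the direction
opposite to the assumed strict one, so `v = 0`. The linear fractional formula is therefore defined
on the whole interval, and it solves the Riccati equation.
-/

section Calculus

variable {ι κ : Type*} {S : Set ℝ} {a b t : ℝ}

theorem hasDerivWithinAt_matrix_iff [Finite ι] {M : ℝ → Matrix κ ι ℝ} {M' : Matrix κ ι ℝ} :
    HasDerivWithinAt M M' S t ↔ ∀ i j, HasDerivWithinAt (fun τ => M τ i j) (M' i j) S t := by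
  cases nonempty_fintype ι
  exact hasDerivWithinAt_pi.trans (forall_congr' fun _ => hasDerivWithinAt_pi)

theorem hasDerivAt_matrix_iff [Finite ι] {M : ℝ → Matrix κ ι ℝ} {M' : Matrix κ ι ℝ} :
    HasDerivAt M M' t ↔ ∀ i j, HasDerivAt (fun τ => M τ i j) (M' i j) t := by
  cases nonempty_fintype ι
  exact hasDerivAt_pi.trans (forall_congr' fun _ => hasDerivAt_pi)

variable [Fintype ι]

theorem hasDerivWithinAt_dotProduct {x y : ℝ → ι → ℝ} {x' y' : ι → ℝ}
    (hx : HasDerivWithinAt x x' S t) (hy : HasDerivWithinAt y y' S t) :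
    HasDerivWithinAt (fun τ => x τ ⬝ᵥ y τ) (x' ⬝ᵥ y t + x t ⬝ᵥ y') S t := by
  rw [hasDerivWithinAt_pi] at hx hy
  have h := HasDerivWithinAt.fun_sum (u := Finset.univ) fun i _ => (hx i).mul (hy i)
  rwa [Finset.sum_add_distrib] at h

theorem hasDerivAt_dotProduct {x y : ℝ → ι → ℝ} {x' y' : ι → ℝ}
    (hx : HasDerivAt x x' t) (hy : HasDerivAt y y' t) :
    HasDerivAt (fun τ => x τ ⬝ᵥ y τ) (x' ⬝ᵥ y t + x t ⬝ᵥ y') t := by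
  rw [← hasDerivWithinAt_univ] at hx hy ⊢
  exact hasDerivWithinAt_dotProduct hx hy

theorem hasDerivWithinAt_mulVec {M : ℝ → Matrix κ ι ℝ} {M' : Matrix κ ι ℝ}
    {x : ℝ → ι → ℝ} {x' : ι → ℝ} (hM : HasDerivWithinAt M M' S t)
    (hx : HasDerivWithinAt x x' S t) :
    HasDerivWithinAt (fun τ => M τ *ᵥ x τ) (M' *ᵥ x t + M t *ᵥ x') S t :=
  hasDerivWithinAt_pi.2 fun i => hasDerivWithinAt_dotProduct (hasDerivWithinAt_pi.1 hM i) hx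

theorem hasDerivAt_mulVec_const {M : ℝ → Matrix κ ι ℝ} {M' : Matrix κ ι ℝ}
    (hM : HasDerivAt M M' t) (v : ι → ℝ) : HasDerivAt (fun τ => M τ *ᵥ v) (M' *ᵥ v) t := by
  refine hasDerivAt_pi.2 fun i => ?_
  simpa only [dotProduct_zero, add_zero] using!
    hasDerivAt_dotProduct (hasDerivAt_pi.1 hM i) (hasDerivAt_const t v)

theorem hasDerivAt_of_forall_mulVec {M : ℝ → Matrix κ ι ℝ} {M' : Matrix κ ι ℝ}
    (h : ∀ v, HasDerivAt (fun τ => M τ *ᵥ v) (M' *ᵥ v) t) : HasDerivAt M M' t := by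
  classical
  refine hasDerivAt_matrix_iff.2 fun i j => ?_
  simpa only [mulVec_single_one, col_apply] using hasDerivAt_pi.1 (h (Pi.single j 1)) i

open scoped Matrix.Norms.Operator in
theorem hasDerivAt_matrix_inv [DecidableEq ι] {X : ℝ → Matrix ι ι ℝ} {X' : Matrix ι ι ℝ}
    (hX : HasDerivAt X X' t) (hu : IsUnit (X t)) :
    HasDerivAt (fun τ => (X τ)⁻¹) (-((X t)⁻¹ * X' * (X t)⁻¹)) t := by
  obtain ⟨u, hu⟩ := hu
  have hinv := hasFDerivAt_ringInverse (𝕜 := ℝ) u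
  rw [hu] at hinv
  have hcomp := hinv.comp_hasDerivAt t hX
  rw [← Ring.inverse_unit, hu] at hcomp
  simp only [nonsing_inv_eq_ringInverse]
  simpa only [_root_.neg_apply, ContinuousLinearMap.mulLeftRight_apply] using! hcomp

open scoped Matrix.Norms.Operator in
theorem hasDerivAt_mul_matrix_inv [DecidableEq ι] {X Y : ℝ → Matrix ι ι ℝ} {X' Y' : Matrix ι ι ℝ}
    (hX : HasDerivAt X X' t) (hY : HasDerivAt Y Y' t) (hu : IsUnit (X t)) :
    HasDerivAt (fun τ => Y τ * (X τ)⁻¹) ((Y' - Y t * (X t)⁻¹ * X') * (X t)⁻¹) t := by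
  refine (HasDerivAt.mul (𝔸 := Matrix ι ι ℝ) hY (hasDerivAt_matrix_inv hX hu)).congr_deriv ?_
  noncomm_ring

theorem antitoneOn_Icc_of_hasDerivWithinAt_nonpos {f f' : ℝ → ℝ}
    (hf : ∀ t ∈ Set.Icc a b, HasDerivWithinAt f (f' t) (Set.Icc a b) t)
    (hf' : ∀ t ∈ Set.Icc a b, f' t ≤ 0) : AntitoneOn f (Set.Icc a b) :=
  antitoneOn_of_hasDerivWithinAt_nonpos (convex_Icc a b)
    (fun t ht => (hf t ht).continuousWithinAt)
    (fun t ht => (hf t (interior_subset ht)).mono interior_subset)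
    fun t ht => hf' t (interior_subset ht)

theorem deriv_eq_zero_of_nonpos_of_eq_endpoints (hab : a < b) {f f' : ℝ → ℝ}
    (hf : ∀ t ∈ Set.Icc a b, HasDerivWithinAt f (f' t) (Set.Icc a b) t)
    (hf' : ∀ t ∈ Set.Icc a b, f' t ≤ 0) (heq : f a = f b) : ∀ t ∈ Set.Icc a b, f' t = 0 := by
  have hanti := antitoneOn_Icc_of_hasDerivWithinAt_nonpos hf hf'
  have hconst : ∀ t ∈ Set.Icc a b, f t = f a := fun t ht =>
    (hanti (Set.left_mem_Icc.2 hab.le) ht ht.1).antisymm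
      (heq.trans_le (hanti ht (Set.right_mem_Icc.2 hab.le) ht.2))
  exact fun t ht => (uniqueDiffOn_Icc hab t ht).eq_deriv _ (hf t ht)
    ((hasDerivWithinAt_const t _ (f a)).congr hconst (hconst t ht))

open scoped Matrix.Norms.Operator in
theorem exists_lipschitzWith_mulVec_of_continuousOn {C : ℝ → Matrix ι ι ℝ}
    (hC : ContinuousOn C (Set.Icc a b)) :
    ∃ K, ∀ t ∈ Set.Icc a b, LipschitzWith K (C t *ᵥ ·) := by
  obtain ⟨K, hK⟩ := isCompact_Icc.exists_bound_of_continuousOn hC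
  refine ⟨K.toNNReal, fun t ht => LipschitzWith.of_dist_le_mul fun v w => ?_⟩
  rw [dist_eq_norm, dist_eq_norm, ← mulVec_sub]
  exact (linfty_opNorm_mulVec _ _).trans
    (mul_le_mul_of_nonneg_right ((hK t ht).trans K.le_coe_toNNReal) (norm_nonneg _))

theorem eqOn_zero_of_hasDerivWithinAt_mulVec {C : ℝ → Matrix ι ι ℝ} {x : ℝ → ι → ℝ} {t₀ : ℝ}
    (hC : ContinuousOn C (Set.Icc a b))
    (hx : ∀ t ∈ Set.Icc a b, HasDerivWithinAt x (C t *ᵥ x t) (Set.Icc a b) t)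
    (ht₀ : t₀ ∈ Set.Icc a b) (h0 : x t₀ = 0) : Set.EqOn x 0 (Set.Icc a b) := by
  obtain ⟨K, hK⟩ := exists_lipschitzWith_mulVec_of_continuousOn hC
  have hxc : ContinuousOn x (Set.Icc a b) := fun t ht => (hx t ht).continuousWithinAt
  have hzero : ∀ (T : Set ℝ) t, HasDerivWithinAt (0 : ℝ → ι → ℝ) (C t *ᵥ (0 : ℝ → ι → ℝ) t) T t :=
    fun T t => by simpa only [Pi.zero_apply, mulVec_zero] using hasDerivWithinAt_zero t T
  have hleft : Set.Icc a t₀ ⊆ Set.Icc a b := Set.Icc_subset_Icc_right ht₀.2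
  have hright : Set.Icc t₀ b ⊆ Set.Icc a b := Set.Icc_subset_Icc_left ht₀.1
  rw [← Set.Icc_union_Icc_eq_Icc ht₀.1 ht₀.2]
  refine Set.EqOn.union
    (ODE_solution_unique_of_mem_Icc_left (K := K) (v := fun t => (C t *ᵥ ·))
      (s := fun _ => Set.univ) (fun t ht => ?_) (hxc.mono hleft) (fun t ht => ?_)
      (fun _ _ => trivial) continuousOn_const (fun t _ => hzero _ t) (fun _ _ => trivial) h0)
    (ODE_solution_unique_of_mem_Icc_right (K := K) (v := fun t => (C t *ᵥ ·))
      (s := fun _ => Set.univ) (fun t ht => ?_) (hxc.mono hright) (fun t ht => ?_)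
      (fun _ _ => trivial) continuousOn_const (fun t _ => hzero _ t) (fun _ _ => trivial) h0)
  · exact (hK t (hleft (Set.Ioc_subset_Icc_self ht))).lipschitzOnWith
  · exact (hx t (hleft (Set.Ioc_subset_Icc_self ht))).mono_of_mem_nhdsWithin
      (Icc_mem_nhdsLE_of_mem ⟨ht.1, ht.2.trans ht₀.2⟩)
  · exact (hK t (hright (Set.Ico_subset_Icc_self ht))).lipschitzOnWith
  · exact (hx t (hright (Set.Ico_subset_Icc_self ht))).mono_of_mem_nhdsWithin
      (Icc_mem_nhdsGE_of_mem ⟨ht₀.1.trans ht.1, ht.2⟩)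

end Calculus

section MatrixLemmas

variable {ι κ : Type*} [Fintype ι]

theorem mulVec_dotProduct [Fintype κ] (M : Matrix κ ι ℝ) (v : ι → ℝ) (w : κ → ℝ) :
    (M *ᵥ v) ⬝ᵥ w = v ⬝ᵥ (Mᵀ *ᵥ w) := by
  rw [dotProduct_transpose_mulVec, dotProduct_comm]

theorem dotProduct_self_nonneg (v : ι → ℝ) : 0 ≤ v ⬝ᵥ v := by
  simpa only [star_trivial] using dotProduct_self_star_nonneg v

theorem dotProduct_self_add_dotProduct_mulVec_nonneg [Fintype κ] {M : Matrix ι ι ℝ}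
    (hM : M.PosSemidef) (v : ι → ℝ) (w : κ → ℝ) : 0 ≤ w ⬝ᵥ w + v ⬝ᵥ M *ᵥ v :=
  add_nonneg (dotProduct_self_nonneg w) (hM.dotProduct_mulVec_nonneg v)

theorem mulVec_sumElim (M : Matrix (ι ⊕ ι) (ι ⊕ ι) ℝ) (v w : ι → ℝ) :
    M *ᵥ Sum.elim v w = Sum.elim (M.toBlocks₁₁ *ᵥ v + M.toBlocks₁₂ *ᵥ w)
      (M.toBlocks₂₁ *ᵥ v + M.toBlocks₂₂ *ᵥ w) := by
  conv_lhs => rw [← fromBlocks_toBlocks M, fromBlocks_mulVec]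
  rfl

theorem isSymm_of_dotProduct_mulVec_comm {M : Matrix ι ι ℝ}
    (h : ∀ v w, v ⬝ᵥ (M *ᵥ w) = (M *ᵥ v) ⬝ᵥ w) : M.IsSymm := by
  classical
  ext i j
  simpa using h (Pi.single j 1) (Pi.single i 1)

theorem isUnit_of_forall_mulVec_eq_zero [DecidableEq ι] {M : Matrix ι ι ℝ}
    (h : ∀ v, M *ᵥ v = 0 → v = 0) : IsUnit M :=
  mulVec_injective_iff_isUnit.1 ((injective_iff_map_eq_zero M.mulVecLin).2 h)

theorem eq_zero_of_transpose_mulVec_eq_zero [Fintype κ] {M : Matrix ι κ ℝ}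
    (hM : M.rank = Fintype.card ι) {y : ι → ℝ} (hy : Mᵀ *ᵥ y = 0) : y = 0 := by
  rw [rank_eq_finrank_span_row] at hM
  have hrow : Function.Injective M.vecMul := by
    rw [vecMul_injective_iff, linearIndependent_iff_card_eq_finrank_span]
    exact hM.symm
  exact hrow ((mulVec_transpose M y).symm.trans (hy.trans (zero_vecMul M).symm))

theorem dotProduct_mulVec_lt_of_posDef_sub {M N : Matrix ι ι ℝ} (h : (N - M).PosDef)
    {v : ι → ℝ} (hv : v ≠ 0) : v ⬝ᵥ M *ᵥ v < v ⬝ᵥ N *ᵥ v := by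
  have := h.dotProduct_mulVec_pos hv
  rwa [star_trivial, sub_mulVec, dotProduct_sub, sub_pos] at this

theorem posDef_sub_of_dotProduct_mulVec_lt {M N : Matrix ι ι ℝ} (hM : M.IsSymm) (hN : N.IsSymm)
    (h : ∀ v ≠ 0, v ⬝ᵥ M *ᵥ v < v ⬝ᵥ N *ᵥ v) : (N - M).PosDef := by
  refine PosDef.of_dotProduct_mulVec_pos (hN.sub hM) fun v hv => ?_
  rw [star_trivial, sub_mulVec, dotProduct_sub, sub_pos]
  exact h v hv

end MatrixLemmas

section HamiltonianTrajectories

variable {ι κ : Type*} [Fintype ι] [Fintype κ] {A Q : ℝ → Matrix ι ι ℝ} {B : ℝ → Matrix ι κ ℝ}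
  {x y x₁ y₁ : ℝ → ι → ℝ} {a b e s t : ℝ}

/-- `(x, y)` is a trajectory of the Hamiltonian system `x' = A x - B Bᵀ y`, `y' = -Q x - Aᵀ y` on
the whole real line, with state `x` and costate `y`. -/
structure IsHamSol (A Q : ℝ → Matrix ι ι ℝ) (B : ℝ → Matrix ι κ ℝ) (x y : ℝ → ι → ℝ) : Prop where
  hasDerivAt_state : ∀ t, HasDerivAt x (A t *ᵥ x t - B t *ᵥ (B t)ᵀ *ᵥ y t) t
  hasDerivAt_costate : ∀ t, HasDerivAt y (-(Q t *ᵥ x t) - (A t)ᵀ *ᵥ y t) t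

namespace IsHamSol

theorem sub (h : IsHamSol A Q B x y) (h₁ : IsHamSol A Q B x₁ y₁) :
    IsHamSol A Q B (x - x₁) (y - y₁) where
  hasDerivAt_state t := by
    refine ((h.hasDerivAt_state t).sub (h₁.hasDerivAt_state t)).congr_deriv ?_
    simp only [Pi.sub_apply, mulVec_sub]
    abel
  hasDerivAt_costate t := by
    refine ((h.hasDerivAt_costate t).sub (h₁.hasDerivAt_costate t)).congr_deriv ?_
    simp only [Pi.sub_apply, mulVec_sub]
    abel

theorem hasDerivAt_dotProduct (h : IsHamSol A Q B x y) (t : ℝ) :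
    HasDerivAt (fun τ => x τ ⬝ᵥ y τ)
      (-(((B t)ᵀ *ᵥ y t) ⬝ᵥ ((B t)ᵀ *ᵥ y t) + x t ⬝ᵥ Q t *ᵥ x t)) t := by
  refine (_root_.hasDerivAt_dotProduct (h.hasDerivAt_state t)
    (h.hasDerivAt_costate t)).congr_deriv ?_
  simp only [sub_dotProduct, dotProduct_sub, dotProduct_neg, mulVec_dotProduct]
  ring

theorem antitone_dotProduct (hQ : ∀ t, (Q t).PosSemidef) (h : IsHamSol A Q B x y) :
    Antitone fun t => x t ⬝ᵥ y t :=
  antitone_of_hasDerivAt_nonpos h.hasDerivAt_dotProduct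
    fun t => neg_nonpos.2 (dotProduct_self_add_dotProduct_mulVec_nonneg (hQ t) _ _)

theorem symplecticForm_eq (hQ : ∀ t, (Q t).IsSymm) (h : IsHamSol A Q B x y)
    (h₁ : IsHamSol A Q B x₁ y₁) (a b : ℝ) :
    x a ⬝ᵥ y₁ a - y a ⬝ᵥ x₁ a = x b ⬝ᵥ y₁ b - y b ⬝ᵥ x₁ b := by
  have hd : ∀ t, HasDerivAt (fun τ => x τ ⬝ᵥ y₁ τ - y τ ⬝ᵥ x₁ τ) 0 t := fun t => by
    refine ((_root_.hasDerivAt_dotProduct (h.hasDerivAt_state t) (h₁.hasDerivAt_costate t)).sub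
      (_root_.hasDerivAt_dotProduct (h.hasDerivAt_costate t)
        (h₁.hasDerivAt_state t))).congr_deriv ?_
    simp only [sub_dotProduct, neg_dotProduct, dotProduct_sub, dotProduct_neg, mulVec_dotProduct,
      transpose_transpose, (hQ t).eq]
    ring
  exact is_const_of_deriv_eq_zero (fun t => (hd t).differentiableAt) (fun t => (hd t).deriv) a b

theorem state_eqOn_zero_of_transpose_mulVec_defect {P : ℝ → Matrix ι ι ℝ} (hA : Continuous A)
    (hB : Continuous B) (hP : ContinuousOn P (Set.Icc a b)) (h : IsHamSol A Q B x y)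
    (hdefect : ∀ t ∈ Set.Icc a b, (B t)ᵀ *ᵥ (y t - P t *ᵥ x t) = 0) (ht : t ∈ Set.Icc a b)
    (hxt : x t = 0) : Set.EqOn x 0 (Set.Icc a b) := by
  have hC : ContinuousOn (fun t => A t - B t * (B t)ᵀ * P t) (Set.Icc a b) :=
    hA.continuousOn.sub ((hB.matrix_mul hB.matrix_transpose).continuousOn.mul hP)
  refine eqOn_zero_of_hasDerivWithinAt_mulVec hC (fun τ hτ => ?_) ht hxt
  have hBy : (B τ)ᵀ *ᵥ y τ = (B τ)ᵀ *ᵥ P τ *ᵥ x τ :=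
    sub_eq_zero.1 ((mulVec_sub _ _ _).symm.trans (hdefect τ hτ))
  have hx := h.hasDerivAt_state τ
  rw [hBy, mulVec_mulVec, mulVec_mulVec, ← sub_mulVec] at hx
  exact hx.hasDerivWithinAt

theorem transpose_mulVec_costate_eq_zero (hQ : ∀ t, (Q t).PosSemidef) (h : IsHamSol A Q B x y)
    (hab : a < b) (hxa : x a = 0) (hxb : x b = 0) :
    ∀ t ∈ Set.Icc a b, (B t)ᵀ *ᵥ y t = 0 := by
  intro t ht
  have hzero := deriv_eq_zero_of_nonpos_of_eq_endpoints hab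
    (fun t _ => (h.hasDerivAt_dotProduct t).hasDerivWithinAt)
    (fun t _ => neg_nonpos.2 (dotProduct_self_add_dotProduct_mulVec_nonneg (hQ t) _ _))
    (by rw [hxa, hxb, zero_dotProduct, zero_dotProduct]) t ht
  have hsum := (add_eq_zero_iff_of_nonneg (dotProduct_self_nonneg _)
    ((hQ t).dotProduct_mulVec_nonneg (x t))).1 (neg_eq_zero.1 hzero)
  exact dotProduct_self_eq_zero.1 hsum.1

/-- The trajectory `(x - x₁, y - y₁)` compares `x₁ ⬝ y` with `x₁ ⬝ y₁` at time `t`, and the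
symplectic form carries the outcome over to time `s`. -/
theorem dotProduct_costate_le_of_le (hQ : ∀ t, (Q t).PosSemidef) (h : IsHamSol A Q B x y)
    (h₁ : IsHamSol A Q B x₁ y₁) (het : e ≤ t) (hts : t ≤ s) (hs : x s = x₁ s) (ht : x t = 0)
    (he : x₁ e = 0) : x s ⬝ᵥ y s ≤ x s ⬝ᵥ y₁ s := by
  have hdiff := (h.sub h₁).antitone_dotProduct hQ hts
  have hsecond := h₁.antitone_dotProduct hQ het
  have hform := h.symplecticForm_eq (fun t => (hQ t).isHermitian) h₁ t s
  simp only [Pi.sub_apply, hs, ht, he, sub_self, zero_sub, zero_dotProduct, neg_dotProduct,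
    dotProduct_sub, dotProduct_comm (y _) (x₁ _)] at hdiff hsecond hform ⊢
  linarith

theorem dotProduct_costate_le_of_ge (hQ : ∀ t, (Q t).PosSemidef) (h : IsHamSol A Q B x y)
    (h₁ : IsHamSol A Q B x₁ y₁) (hst : s ≤ t) (hte : t ≤ e) (hs : x s = x₁ s) (ht : x t = 0)
    (he : x₁ e = 0) : x s ⬝ᵥ y₁ s ≤ x s ⬝ᵥ y s := by
  have hdiff := (h.sub h₁).antitone_dotProduct hQ hst
  have hsecond := h₁.antitone_dotProduct hQ hte
  have hform := h.symplecticForm_eq (fun t => (hQ t).isHermitian) h₁ t s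
  simp only [Pi.sub_apply, hs, ht, he, sub_self, zero_sub, zero_dotProduct, neg_dotProduct,
    dotProduct_sub, dotProduct_comm (y _) (x₁ _)] at hdiff hsecond hform ⊢
  linarith

end IsHamSol

end HamiltonianTrajectories

section TransitionMatrix

variable {ι κ : Type*} [Fintype ι] [Fintype κ] {A Q : ℝ → Matrix ι ι ℝ}
  {B : ℝ → Matrix ι κ ℝ} {Φ : ℝ → ℝ → Matrix (ι ⊕ ι) (ι ⊕ ι) ℝ} {K : Matrix ι ι ℝ} {e s t : ℝ}

/-- The coefficient matrix `M(t)` of the Hamiltonian system. -/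
def hamiltonianMatrix (A Q : ℝ → Matrix ι ι ℝ) (B : ℝ → Matrix ι κ ℝ) (t : ℝ) :
    Matrix (ι ⊕ ι) (ι ⊕ ι) ℝ :=
  fromBlocks (A t) (-(B t * (B t)ᵀ)) (-(Q t)) (-(A t)ᵀ)

/-- `X(t) = Φ₁₁(t, s) + Φ₁₂(t, s) K`: it sends `v` to the state at time `t` of the trajectory
through `(v, K v)` at time `s`. -/
def stateFlow (Φ : ℝ → ℝ → Matrix (ι ⊕ ι) (ι ⊕ ι) ℝ) (s : ℝ) (K : Matrix ι ι ℝ) (t : ℝ) :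
    Matrix ι ι ℝ :=
  (Φ t s).toBlocks₁₁ + (Φ t s).toBlocks₁₂ * K

/-- `Y(t) = Φ₂₁(t, s) + Φ₂₂(t, s) K`: it sends `v` to the costate at time `t` of the trajectory
through `(v, K v)` at time `s`. -/
def costateFlow (Φ : ℝ → ℝ → Matrix (ι ⊕ ι) (ι ⊕ ι) ℝ) (s : ℝ) (K : Matrix ι ι ℝ) (t : ℝ) :
    Matrix ι ι ℝ :=
  (Φ t s).toBlocks₂₁ + (Φ t s).toBlocks₂₂ * K

variable [DecidableEq ι]

/-- `Y(t) X(t)⁻¹`, the image of `K` under the linear fractional action of `Φ(t, s)`; it is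
meaningful only where `stateFlow Φ s K t` is invertible. -/
noncomputable def riccatiFlow (Φ : ℝ → ℝ → Matrix (ι ⊕ ι) (ι ⊕ ι) ℝ) (s : ℝ) (K : Matrix ι ι ℝ)
    (t : ℝ) : Matrix ι ι ℝ :=
  costateFlow Φ s K t * (stateFlow Φ s K t)⁻¹

/-- `-Φ₁₂(e, s)⁻¹ Φ₁₁(e, s)`: it sends `v` to the costate at time `s` of the trajectory with state
`v` at time `s` and state `0` at time `e`, provided `Φ₁₂(e, s)` is invertible. -/
noncomputable def boundaryMatrix (Φ : ℝ → ℝ → Matrix (ι ⊕ ι) (ι ⊕ ι) ℝ) (e s : ℝ) :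
    Matrix ι ι ℝ :=
  -((Φ e s).toBlocks₁₂⁻¹ * (Φ e s).toBlocks₁₁)

/-- Disconjugacy of the Hamiltonian system on `I`: `Φ₁₂(e, s)` is invertible for distinct
`e, s ∈ I`, that is, the state of a nonzero trajectory vanishes at most once in `I`. -/
def IsDisconjugateOn (Φ : ℝ → ℝ → Matrix (ι ⊕ ι) (ι ⊕ ι) ℝ) (I : Set ℝ) : Prop :=
  I.Pairwise fun e s => IsUnit (Φ e s).toBlocks₁₂

theorem stateFlow_self (h : Φ s s = 1) : stateFlow Φ s K s = 1 := by
  rw [stateFlow, h, ← fromBlocks_one, toBlocks_fromBlocks₁₁, toBlocks_fromBlocks₁₂,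
    Matrix.zero_mul, add_zero]

theorem costateFlow_self (h : Φ s s = 1) : costateFlow Φ s K s = K := by
  rw [costateFlow, h, ← fromBlocks_one, toBlocks_fromBlocks₂₁, toBlocks_fromBlocks₂₂,
    Matrix.one_mul, zero_add]

theorem riccatiFlow_self (h : Φ s s = 1) : riccatiFlow Φ s K s = K := by
  rw [riccatiFlow, stateFlow_self h, costateFlow_self h, inv_one, Matrix.mul_one]

theorem stateFlow_boundaryMatrix_eq_zero (h : IsUnit (Φ e s).toBlocks₁₂) :
    stateFlow Φ s (boundaryMatrix Φ e s) e = 0 := by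
  rw [stateFlow, boundaryMatrix, Matrix.mul_neg,
    mul_nonsing_inv_cancel_left _ _ ((isUnit_iff_isUnit_det _).1 h), add_neg_cancel]

namespace IsSTM

theorem isHamSol (hΦ : IsSTM (hamiltonianMatrix A Q B) Φ) (s : ℝ) (v w : ι → ℝ) :
    IsHamSol A Q B (fun t => (Φ t s).toBlocks₁₁ *ᵥ v + (Φ t s).toBlocks₁₂ *ᵥ w)
      (fun t => (Φ t s).toBlocks₂₁ *ᵥ v + (Φ t s).toBlocks₂₂ *ᵥ w) := by
  have h : ∀ t, HasDerivAt (fun τ => Φ τ s *ᵥ Sum.elim v w)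
      (hamiltonianMatrix A Q B t *ᵥ Φ t s *ᵥ Sum.elim v w) t := fun t => by
    rw [mulVec_mulVec]
    exact hasDerivAt_mulVec_const (hasDerivAt_matrix_iff.2 (hΦ.2 s t)) _
  simp only [mulVec_sumElim, hamiltonianMatrix, toBlocks_fromBlocks₁₁, toBlocks_fromBlocks₁₂,
    toBlocks_fromBlocks₂₁, toBlocks_fromBlocks₂₂, neg_mulVec, ← sub_eq_add_neg,
    ← mulVec_mulVec] at h
  exact ⟨fun t => hasDerivAt_pi.2 fun i => hasDerivAt_pi.1 (h t) (Sum.inl i),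
    fun t => hasDerivAt_pi.2 fun i => hasDerivAt_pi.1 (h t) (Sum.inr i)⟩

theorem isHamSol_flow (hΦ : IsSTM (hamiltonianMatrix A Q B) Φ) (s : ℝ) (K : Matrix ι ι ℝ)
    (v : ι → ℝ) :
    IsHamSol A Q B (fun t => stateFlow Φ s K t *ᵥ v) (fun t => costateFlow Φ s K t *ᵥ v) := by
  simpa only [stateFlow, costateFlow, add_mulVec, mulVec_mulVec] using hΦ.isHamSol s v (K *ᵥ v)

theorem hasDerivAt_stateFlow (hΦ : IsSTM (hamiltonianMatrix A Q B) Φ) (s : ℝ)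
    (K : Matrix ι ι ℝ) (t : ℝ) :
    HasDerivAt (stateFlow Φ s K)
      (A t * stateFlow Φ s K t - B t * (B t)ᵀ * costateFlow Φ s K t) t :=
  hasDerivAt_of_forall_mulVec fun v => by
    simpa only [sub_mulVec, mulVec_mulVec, Matrix.mul_assoc] using
      (hΦ.isHamSol_flow s K v).hasDerivAt_state t

theorem hasDerivAt_costateFlow (hΦ : IsSTM (hamiltonianMatrix A Q B) Φ) (s : ℝ)
    (K : Matrix ι ι ℝ) (t : ℝ) :
    HasDerivAt (costateFlow Φ s K)
      (-(Q t * stateFlow Φ s K t) - (A t)ᵀ * costateFlow Φ s K t) t :=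
  hasDerivAt_of_forall_mulVec fun v => by
    simpa only [sub_mulVec, neg_mulVec, mulVec_mulVec] using
      (hΦ.isHamSol_flow s K v).hasDerivAt_costate t

theorem isSymm_boundaryMatrix (hQ : ∀ t, (Q t).IsSymm) (hΦ : IsSTM (hamiltonianMatrix A Q B) Φ)
    (hu : IsUnit (Φ e s).toBlocks₁₂) : (boundaryMatrix Φ e s).IsSymm := by
  refine isSymm_of_dotProduct_mulVec_comm fun v w => sub_eq_zero.1 ?_
  have hform := (hΦ.isHamSol_flow s (boundaryMatrix Φ e s) v).symplecticForm_eq hQ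
    (hΦ.isHamSol_flow s (boundaryMatrix Φ e s) w) s e
  simpa only [stateFlow_self (hΦ.1 s), costateFlow_self (hΦ.1 s),
    stateFlow_boundaryMatrix_eq_zero hu, one_mulVec, zero_mulVec, zero_dotProduct,
    dotProduct_zero, sub_zero] using hform

/-- If `(v, K v)` at time `s` leads to state `0` at time `t`, comparing with the trajectory that
starts from `(v, boundaryMatrix Φ e s v)` contradicts the bound on `K` unless `v = 0`. -/
theorem isUnit_stateFlow_of_le (hQ : ∀ t, (Q t).PosSemidef)
    (hΦ : IsSTM (hamiltonianMatrix A Q B) Φ) (het : e ≤ t) (hts : t ≤ s)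
    (hu : IsUnit (Φ e s).toBlocks₁₂) (hK : (K - boundaryMatrix Φ e s).PosDef) :
    IsUnit (stateFlow Φ s K t) := by
  refine isUnit_of_forall_mulVec_eq_zero fun v hv => by_contra fun hv0 => ?_
  have hle := (hΦ.isHamSol_flow s K v).dotProduct_costate_le_of_le hQ
    (hΦ.isHamSol_flow s (boundaryMatrix Φ e s) v) het hts
    (by rw [stateFlow_self (hΦ.1 s), stateFlow_self (hΦ.1 s)]) hv
    (by rw [stateFlow_boundaryMatrix_eq_zero hu, zero_mulVec])
  simp only [stateFlow_self (hΦ.1 s), costateFlow_self (hΦ.1 s), one_mulVec] at hle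
  exact hle.not_gt (dotProduct_mulVec_lt_of_posDef_sub hK hv0)

theorem isUnit_stateFlow_of_ge (hQ : ∀ t, (Q t).PosSemidef)
    (hΦ : IsSTM (hamiltonianMatrix A Q B) Φ) (hst : s ≤ t) (hte : t ≤ e)
    (hu : IsUnit (Φ e s).toBlocks₁₂) (hK : (boundaryMatrix Φ e s - K).PosDef) :
    IsUnit (stateFlow Φ s K t) := by
  refine isUnit_of_forall_mulVec_eq_zero fun v hv => by_contra fun hv0 => ?_
  have hle := (hΦ.isHamSol_flow s K v).dotProduct_costate_le_of_ge hQ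
    (hΦ.isHamSol_flow s (boundaryMatrix Φ e s) v) hst hte
    (by rw [stateFlow_self (hΦ.1 s), stateFlow_self (hΦ.1 s)]) hv
    (by rw [stateFlow_boundaryMatrix_eq_zero hu, zero_mulVec])
  simp only [stateFlow_self (hΦ.1 s), costateFlow_self (hΦ.1 s), one_mulVec] at hle
  exact hle.not_gt (dotProduct_mulVec_lt_of_posDef_sub hK hv0)

end IsSTM

end TransitionMatrix

section Controllability

variable {n p : ℕ} {A Q : ℝ → Matrix (Fin n) (Fin n) ℝ} {B : ℝ → Matrix (Fin n) (Fin p) ℝ}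
  {Γ : ℕ → ℝ → Matrix (Fin n) (Fin p) ℝ} {x y : ℝ → Fin n → ℝ} {a b : ℝ}

theorem IsCtrbMatSeq.transpose_mulVec_eq_zero (hΓ : IsCtrbMatSeq A B Γ) (hab : a < b)
    (hy : ∀ t ∈ Set.Icc a b, HasDerivWithinAt y (-(A t)ᵀ *ᵥ y t) (Set.Icc a b) t)
    (hBy : ∀ t ∈ Set.Icc a b, (B t)ᵀ *ᵥ y t = 0) {k : ℕ} (hk : k ≤ n) :
    ∀ t ∈ Set.Icc a b, (Γ k t)ᵀ *ᵥ y t = 0 := by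
  induction k with
  | zero => rwa [hΓ.1]
  | succ k ih =>
    intro t ht
    have hk0 := ih (Nat.le_of_succ_le hk)
    have hΓ' : HasDerivWithinAt (fun τ => (Γ k τ)ᵀ) (Γ (k + 1) t + A t * Γ k t)ᵀ
        (Set.Icc a b) t :=
      hasDerivWithinAt_matrix_iff.2 fun i j => (hΓ.2 k hk t j i).hasDerivWithinAt
    have hderiv := (uniqueDiffOn_Icc hab t ht).eq_deriv _ (hasDerivWithinAt_mulVec hΓ' (hy t ht))
      ((hasDerivWithinAt_const t _ (0 : Fin p → ℝ)).congr hk0 (hk0 t ht))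
    rwa [transpose_add, transpose_mul, add_mulVec, neg_mulVec, mulVec_neg, mulVec_mulVec,
      add_neg_cancel_right] at hderiv

namespace TotallyControllable

theorem adjoint_eqOn_zero (hTC : TotallyControllable Γ) (hΓ : IsCtrbMatSeq A B Γ)
    (hA : Continuous A) (ha : 0 ≤ a) (hab : a < b) (hb : b ≤ 1)
    (hy : ∀ t ∈ Set.Icc a b, HasDerivWithinAt y (-(A t)ᵀ *ᵥ y t) (Set.Icc a b) t)
    (hBy : ∀ t ∈ Set.Icc a b, (B t)ᵀ *ᵥ y t = 0) : Set.EqOn y 0 (Set.Icc a b) := by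
  obtain ⟨t, ht, hrank⟩ := hTC a b ha hab hb
  have htI := Set.Ioo_subset_Icc_self ht
  have hΘ : (ctrbMat Γ t)ᵀ *ᵥ y t = 0 := funext fun kj =>
    congrFun (hΓ.transpose_mulVec_eq_zero hab hy hBy kj.1.2.le t htI) kj.2
  exact eqOn_zero_of_hasDerivWithinAt_mulVec hA.matrix_transpose.neg.continuousOn hy htI
    (eq_zero_of_transpose_mulVec_eq_zero (by rw [hrank, Fintype.card_fin]) hΘ)

theorem costate_eqOn_zero (hTC : TotallyControllable Γ) (hΓ : IsCtrbMatSeq A B Γ)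
    (hA : Continuous A) (hB : Continuous B) (hQ : ∀ t, (Q t).PosSemidef)
    (h : IsHamSol A Q B x y) (ha : 0 ≤ a) (hab : a < b) (hb : b ≤ 1) (hxa : x a = 0)
    (hxb : x b = 0) : Set.EqOn y 0 (Set.Icc a b) := by
  have hBy := h.transpose_mulVec_costate_eq_zero hQ hab hxa hxb
  have hx : Set.EqOn x 0 (Set.Icc a b) :=
    h.state_eqOn_zero_of_transpose_mulVec_defect hA hB continuousOn_const (P := fun _ => 0)
      (fun t ht => by rw [zero_mulVec, sub_zero, hBy t ht]) (Set.left_mem_Icc.2 hab.le) hxa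
  refine hTC.adjoint_eqOn_zero hΓ hA ha hab hb (fun t ht => ?_) hBy
  have hy := h.hasDerivAt_costate t
  rw [hx ht, Pi.zero_apply, mulVec_zero, neg_zero, zero_sub, ← neg_mulVec] at hy
  exact hy.hasDerivWithinAt

theorem isDisconjugateOn (hTC : TotallyControllable Γ) (hΓ : IsCtrbMatSeq A B Γ)
    (hA : Continuous A) (hB : Continuous B) (hQ : ∀ t, (Q t).PosSemidef)
    {Φ : ℝ → ℝ → Matrix (Fin n ⊕ Fin n) (Fin n ⊕ Fin n) ℝ}
    (hΦ : IsSTM (hamiltonianMatrix A Q B) Φ) : IsDisconjugateOn Φ (Set.Icc 0 1) := by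
  intro e he s hs hes
  refine isUnit_of_forall_mulVec_eq_zero fun w hw => ?_
  have h := hΦ.isHamSol s 0 w
  simp only [mulVec_zero, zero_add] at h
  have hs1 : Φ s s = fromBlocks 1 0 0 1 := (hΦ.1 s).trans fromBlocks_one.symm
  have hxs : (Φ s s).toBlocks₁₂ *ᵥ w = 0 := by rw [hs1, toBlocks_fromBlocks₁₂, zero_mulVec]
  have hys : (Φ s s).toBlocks₂₂ *ᵥ w = w := by rw [hs1, toBlocks_fromBlocks₂₂, one_mulVec]
  rw [← hys]
  rcases lt_or_gt_of_ne hes with hlt | hgt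
  · exact hTC.costate_eqOn_zero hΓ hA hB hQ h he.1 hlt hs.2 hw hxs (Set.right_mem_Icc.2 hlt.le)
  · exact hTC.costate_eqOn_zero hΓ hA hB hQ h hs.1 hgt he.2 hxs hw (Set.left_mem_Icc.2 hgt.le)

end TotallyControllable

end Controllability

section Riccati

variable {n p : ℕ} {A Q P : ℝ → Matrix (Fin n) (Fin n) ℝ} {B : ℝ → Matrix (Fin n) (Fin p) ℝ}
  {Φ : ℝ → ℝ → Matrix (Fin n ⊕ Fin n) (Fin n ⊕ Fin n) ℝ} {K : Matrix (Fin n) (Fin n) ℝ}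
  {x y : ℝ → Fin n → ℝ} {S T : Set ℝ} {a b e s t : ℝ}

theorem IsSTM.isRiccatiSolOn_riccatiFlow (hΦ : IsSTM (hamiltonianMatrix A Q B) Φ)
    (hu : ∀ t ∈ S, IsUnit (stateFlow Φ s K t)) :
    IsRiccatiSolOn A Q B (riccatiFlow Φ s K) S := by
  intro t ht i j
  have hXX : stateFlow Φ s K t * (stateFlow Φ s K t)⁻¹ = 1 :=
    mul_nonsing_inv _ ((isUnit_iff_isUnit_det _).1 (hu t ht))
  have hderiv := hasDerivAt_matrix_iff.1 (hasDerivAt_mul_matrix_inv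
    (hΦ.hasDerivAt_stateFlow s K t) (hΦ.hasDerivAt_costateFlow s K t) (hu t ht)) i j
  refine (hderiv.congr_deriv (Matrix.ext_iff.2 ?_ i j)).hasDerivWithinAt
  simp only [riccatiFlow, Matrix.sub_mul, Matrix.mul_sub, Matrix.neg_mul, Matrix.mul_assoc, hXX,
    Matrix.mul_one]
  abel

namespace IsRiccatiSolOn

theorem mono (hP : IsRiccatiSolOn A Q B P S) (hTS : T ⊆ S) : IsRiccatiSolOn A Q B P T :=
  fun t ht i j => (hP t (hTS ht) i j).mono hTS

theorem continuousOn (hP : IsRiccatiSolOn A Q B P S) : ContinuousOn P S :=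
  continuousOn_pi.2 fun i => continuousOn_pi.2 fun j => fun t ht =>
    (hP t ht i j).continuousWithinAt

theorem hasDerivWithinAt_defect (hP : IsRiccatiSolOn A Q B P S) (h : IsHamSol A Q B x y)
    (ht : t ∈ S) :
    HasDerivWithinAt (fun τ => y τ - P τ *ᵥ x τ)
      ((P t * (B t * (B t)ᵀ) - (A t)ᵀ) *ᵥ (y t - P t *ᵥ x t)) S t := by
  refine ((h.hasDerivAt_costate t).hasDerivWithinAt.sub
    (hasDerivWithinAt_mulVec (hasDerivWithinAt_matrix_iff.2 (hP t ht))
      (h.hasDerivAt_state t).hasDerivWithinAt)).congr_deriv ?_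
  simp only [mulVec_sub, sub_mulVec, add_mulVec, neg_mulVec, ← mulVec_mulVec]
  abel

theorem costate_eq_mulVec_state (hA : Continuous A) (hB : Continuous B)
    (hP : IsRiccatiSolOn A Q B P (Set.Icc a b)) (h : IsHamSol A Q B x y) (hs : s ∈ Set.Icc a b)
    (hys : y s = P s *ᵥ x s) (ht : t ∈ Set.Icc a b) : y t = P t *ᵥ x t := by
  have hC : ContinuousOn (fun t => P t * (B t * (B t)ᵀ) - (A t)ᵀ) (Set.Icc a b) :=
    (hP.continuousOn.mul (hB.matrix_mul hB.matrix_transpose).continuousOn).sub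
      hA.matrix_transpose.continuousOn
  exact sub_eq_zero.1 (eqOn_zero_of_hasDerivWithinAt_mulVec hC
    (fun τ hτ => hP.hasDerivWithinAt_defect h hτ) hs (sub_eq_zero.2 hys) ht)

theorem costateFlow_eq_mul_stateFlow (hA : Continuous A) (hB : Continuous B)
    (hΦ : IsSTM (hamiltonianMatrix A Q B) Φ) (hP : IsRiccatiSolOn A Q B P (Set.Icc a b))
    (hs : s ∈ Set.Icc a b) (ht : t ∈ Set.Icc a b) :
    costateFlow Φ s (P s) t = P t * stateFlow Φ s (P s) t := by
  refine ext_of_mulVec_single fun j => ?_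
  rw [← mulVec_mulVec]
  refine hP.costate_eq_mulVec_state hA hB (hΦ.isHamSol_flow s (P s) _) hs ?_ ht
  simp only [stateFlow_self (hΦ.1 s), costateFlow_self (hΦ.1 s), one_mulVec]

theorem isUnit_stateFlow (hA : Continuous A) (hB : Continuous B)
    (hΦ : IsSTM (hamiltonianMatrix A Q B) Φ) (hP : IsRiccatiSolOn A Q B P (Set.Icc a b))
    (hs : s ∈ Set.Icc a b) (ht : t ∈ Set.Icc a b) : IsUnit (stateFlow Φ s (P s) t) := by
  refine isUnit_of_forall_mulVec_eq_zero fun v hv => ?_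
  have hgraph : ∀ τ ∈ Set.Icc a b,
      costateFlow Φ s (P s) τ *ᵥ v - P τ *ᵥ stateFlow Φ s (P s) τ *ᵥ v = 0 := fun τ hτ => by
    rw [hP.costateFlow_eq_mul_stateFlow hA hB hΦ hs hτ, mulVec_mulVec, sub_self]
  have hzero := (hΦ.isHamSol_flow s (P s) v).state_eqOn_zero_of_transpose_mulVec_defect hA hB
    hP.continuousOn (fun τ hτ => by rw [hgraph τ hτ, mulVec_zero]) ht hv hs
  simpa only [stateFlow_self (hΦ.1 s), one_mulVec] using! hzero

theorem eq_riccatiFlow (hA : Continuous A) (hB : Continuous B)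
    (hΦ : IsSTM (hamiltonianMatrix A Q B) Φ) (hP : IsRiccatiSolOn A Q B P (Set.Icc a b))
    (hs : s ∈ Set.Icc a b) (ht : t ∈ Set.Icc a b) : P t = riccatiFlow Φ s (P s) t := by
  have hu := hP.isUnit_stateFlow hA hB hΦ hs ht
  rw [riccatiFlow, hP.costateFlow_eq_mul_stateFlow hA hB hΦ hs ht,
    mul_nonsing_inv_cancel_right _ _ ((isUnit_iff_isUnit_det _).1 hu)]

theorem isSymm (hA : Continuous A) (hB : Continuous B) (hQ : ∀ t, (Q t).IsSymm)
    (hΦ : IsSTM (hamiltonianMatrix A Q B) Φ) (hP : IsRiccatiSolOn A Q B P (Set.Icc a b))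
    (hs : s ∈ Set.Icc a b) (hPs : (P s).IsSymm) (ht : t ∈ Set.Icc a b) : (P t).IsSymm := by
  refine isSymm_of_dotProduct_mulVec_comm fun v w => sub_eq_zero.1 ?_
  have hform := (hΦ.isHamSol_flow t (P t) v).symplecticForm_eq hQ (hΦ.isHamSol_flow t (P t) w) t s
  simpa only [stateFlow_self (hΦ.1 t), costateFlow_self (hΦ.1 t), one_mulVec,
    hP.costateFlow_eq_mul_stateFlow hA hB hΦ ht hs, ← mulVec_mulVec, mulVec_dotProduct (P s),
    hPs.eq, sub_self] using hform

theorem hasDerivWithinAt_dotProduct_defect (hP : IsRiccatiSolOn A Q B P S)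
    (h : IsHamSol A Q B x y) (ht : t ∈ S) (hPt : (P t).IsSymm) :
    HasDerivWithinAt (fun τ => x τ ⬝ᵥ (y τ - P τ *ᵥ x τ))
      (-(((B t)ᵀ *ᵥ (y t - P t *ᵥ x t)) ⬝ᵥ ((B t)ᵀ *ᵥ (y t - P t *ᵥ x t)))) S t := by
  refine (hasDerivWithinAt_dotProduct (h.hasDerivAt_state t).hasDerivWithinAt
    (hP.hasDerivWithinAt_defect h ht)).congr_deriv ?_
  obtain ⟨z, hy⟩ : ∃ z, y t = z + P t *ᵥ x t := ⟨y t - P t *ᵥ x t, (sub_add_cancel _ _).symm⟩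
  simp only [hy, add_sub_cancel_right, sub_dotProduct, mulVec_add, add_dotProduct, sub_mulVec,
    dotProduct_sub, mulVec_dotProduct, ← mulVec_mulVec, transpose_transpose, hPt.eq]
  ring

/-- Equality would force `Bᵀ (y - P x) = 0`, hence `x' = (A - B Bᵀ P) x` and `x = 0`. -/
theorem dotProduct_defect_lt (hA : Continuous A) (hB : Continuous B) (hab : a < b)
    (hP : IsRiccatiSolOn A Q B P (Set.Icc a b)) (hsymm : ∀ t ∈ Set.Icc a b, (P t).IsSymm)
    (h : IsHamSol A Q B x y) (hs : s ∈ Set.Icc a b) (ht : t ∈ Set.Icc a b) (hxs : x s ≠ 0)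
    (hxt : x t = 0) : x b ⬝ᵥ (y b - P b *ᵥ x b) < x a ⬝ᵥ (y a - P a *ᵥ x a) := by
  have hd := fun t ht => hP.hasDerivWithinAt_dotProduct_defect h ht (hsymm t ht)
  have hnonpos := fun t (_ : t ∈ Set.Icc a b) =>
    neg_nonpos.2 (dotProduct_self_nonneg ((B t)ᵀ *ᵥ (y t - P t *ᵥ x t)))
  refine (antitoneOn_Icc_of_hasDerivWithinAt_nonpos hd hnonpos (Set.left_mem_Icc.2 hab.le)
    (Set.right_mem_Icc.2 hab.le) hab.le).lt_of_ne fun heq => hxs ?_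
  have hzero := deriv_eq_zero_of_nonpos_of_eq_endpoints hab hd hnonpos heq.symm
  exact h.state_eqOn_zero_of_transpose_mulVec_defect hA hB hP.continuousOn
    (fun τ hτ => dotProduct_self_eq_zero.1 (neg_eq_zero.1 (hzero τ hτ))) ht hxt hs

theorem posDef_sub_boundaryMatrix (hA : Continuous A) (hB : Continuous B)
    (hQ : ∀ t, (Q t).IsSymm) (hΦ : IsSTM (hamiltonianMatrix A Q B) Φ) (hes : e < s)
    (hu : IsUnit (Φ e s).toBlocks₁₂) (hP : IsRiccatiSolOn A Q B P (Set.Icc e s))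
    (hPs : (P s).IsSymm) : (P s - boundaryMatrix Φ e s).PosDef := by
  have hs := Set.right_mem_Icc.2 hes.le
  refine posDef_sub_of_dotProduct_mulVec_lt (hΦ.isSymm_boundaryMatrix hQ hu) hPs fun v hv => ?_
  have hlt := hP.dotProduct_defect_lt hA hB hes (fun t ht => hP.isSymm hA hB hQ hΦ hs hPs ht)
    (hΦ.isHamSol_flow s (boundaryMatrix Φ e s) v) hs (Set.left_mem_Icc.2 hes.le)
    (by rwa [stateFlow_self (hΦ.1 s), one_mulVec])
    (by rw [stateFlow_boundaryMatrix_eq_zero hu, zero_mulVec])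
  simpa only [stateFlow_self (hΦ.1 s), costateFlow_self (hΦ.1 s),
    stateFlow_boundaryMatrix_eq_zero hu, one_mulVec, zero_mulVec, zero_dotProduct,
    dotProduct_sub, sub_zero, sub_neg] using hlt

theorem posDef_boundaryMatrix_sub (hA : Continuous A) (hB : Continuous B)
    (hQ : ∀ t, (Q t).IsSymm) (hΦ : IsSTM (hamiltonianMatrix A Q B) Φ) (hse : s < e)
    (hu : IsUnit (Φ e s).toBlocks₁₂) (hP : IsRiccatiSolOn A Q B P (Set.Icc s e))
    (hPs : (P s).IsSymm) : (boundaryMatrix Φ e s - P s).PosDef := by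
  have hs := Set.left_mem_Icc.2 hse.le
  refine posDef_sub_of_dotProduct_mulVec_lt hPs (hΦ.isSymm_boundaryMatrix hQ hu) fun v hv => ?_
  have hlt := hP.dotProduct_defect_lt hA hB hse (fun t ht => hP.isSymm hA hB hQ hΦ hs hPs ht)
    (hΦ.isHamSol_flow s (boundaryMatrix Φ e s) v) hs (Set.right_mem_Icc.2 hse.le)
    (by rwa [stateFlow_self (hΦ.1 s), one_mulVec])
    (by rw [stateFlow_boundaryMatrix_eq_zero hu, zero_mulVec])
  simpa only [stateFlow_self (hΦ.1 s), costateFlow_self (hΦ.1 s),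
    stateFlow_boundaryMatrix_eq_zero hu, one_mulVec, zero_mulVec, zero_dotProduct,
    dotProduct_sub, sub_zero, sub_pos] using hlt

end IsRiccatiSolOn

theorem IsDisconjugateOn.isUnit_stateFlow (hQ : ∀ t, (Q t).PosSemidef)
    (hΦ : IsSTM (hamiltonianMatrix A Q B) Φ) (hΦab : IsDisconjugateOn Φ (Set.Icc a b))
    (hs : s ∈ Set.Icc a b) (hlower : a < s → (K - boundaryMatrix Φ a s).PosDef)
    (hupper : s < b → (boundaryMatrix Φ b s - K).PosDef) (ht : t ∈ Set.Icc a b) :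
    IsUnit (stateFlow Φ s K t) := by
  have ha : a ∈ Set.Icc a b := Set.left_mem_Icc.2 (hs.1.trans hs.2)
  have hb : b ∈ Set.Icc a b := Set.right_mem_Icc.2 (hs.1.trans hs.2)
  rcases lt_trichotomy t s with hts | rfl | hst
  · have has := ht.1.trans_lt hts
    exact hΦ.isUnit_stateFlow_of_le hQ ht.1 hts.le (hΦab ha hs has.ne) (hlower has)
  · rw [stateFlow_self (hΦ.1 t)]
    exact isUnit_one
  · have hsb := hst.trans_le ht.2
    exact hΦ.isUnit_stateFlow_of_ge hQ hst.le ht.2 (hΦab hb hs hsb.ne') (hupper hsb)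

theorem IsDisconjugateOn.posDef_of_isRiccatiSolOn (hA : Continuous A) (hB : Continuous B)
    (hQ : ∀ t, (Q t).IsSymm) (hΦ : IsSTM (hamiltonianMatrix A Q B) Φ)
    (hΦab : IsDisconjugateOn Φ (Set.Icc a b)) (hP : IsRiccatiSolOn A Q B P (Set.Icc a b))
    (ht : t ∈ Set.Icc a b) (hPt : (P t).IsSymm) :
    (a < t → (P t - boundaryMatrix Φ a t).PosDef) ∧
      (t < b → (boundaryMatrix Φ b t - P t).PosDef) := by
  have hab := ht.1.trans ht.2
  exact ⟨fun hat => (hP.mono (Set.Icc_subset_Icc_right ht.2)).posDef_sub_boundaryMatrix hA hB hQ hΦ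
      hat (hΦab (Set.left_mem_Icc.2 hab) ht hat.ne) hPt,
    fun htb => (hP.mono (Set.Icc_subset_Icc_left ht.1)).posDef_boundaryMatrix_sub hA hB hQ hΦ
      htb (hΦab (Set.right_mem_Icc.2 hab) ht htb.ne') hPt⟩

end Riccati

theorem stmt_6_general {n p : ℕ} {A Q : ℝ → Matrix (Fin n) (Fin n) ℝ}
    {B : ℝ → Matrix (Fin n) (Fin p) ℝ} (hA : Continuous A) (hB : Continuous B)
    (hQ : ∀ t, (Q t).PosSemidef) {Φ : ℝ → ℝ → Matrix (Fin n ⊕ Fin n) (Fin n ⊕ Fin n) ℝ}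
    (hΦ : IsSTM (hamiltonianMatrix A Q B) Φ) {a b : ℝ}
    (hΦab : IsDisconjugateOn Φ (Set.Icc a b)) {s : ℝ} (hs : s ∈ Set.Icc a b)
    {Ps : Matrix (Fin n) (Fin n) ℝ} (hPs : Ps.IsSymm) :
    ((∃ P : ℝ → Matrix (Fin n) (Fin n) ℝ, P s = Ps ∧ IsRiccatiSolOn A Q B P (Set.Icc a b)) ↔
      (a < s → (Ps - boundaryMatrix Φ a s).PosDef) ∧
        (s < b → (boundaryMatrix Φ b s - Ps).PosDef)) ∧
    ∀ P : ℝ → Matrix (Fin n) (Fin n) ℝ, P s = Ps → IsRiccatiSolOn A Q B P (Set.Icc a b) →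
      (∀ t ∈ Set.Icc a b, P t = riccatiFlow Φ s Ps t) ∧
      ∀ t ∈ Set.Ioo a b,
        (P t - boundaryMatrix Φ a t).PosDef ∧ (boundaryMatrix Φ b t - P t).PosDef := by
  have hQsymm : ∀ t, (Q t).IsSymm := fun t => (hQ t).isHermitian
  refine ⟨⟨?_, fun ⟨hlower, hupper⟩ => ?_⟩, ?_⟩
  · rintro ⟨P, rfl, hP⟩
    exact hΦab.posDef_of_isRiccatiSolOn hA hB hQsymm hΦ hP hs hPs
  · exact ⟨riccatiFlow Φ s Ps, riccatiFlow_self (hΦ.1 s), hΦ.isRiccatiSolOn_riccatiFlow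
      fun t ht => hΦab.isUnit_stateFlow hQ hΦ hs hlower hupper ht⟩
  · rintro P rfl hP
    refine ⟨fun t ht => hP.eq_riccatiFlow hA hB hΦ hs ht, fun t ht => ?_⟩
    have htI := Set.Ioo_subset_Icc_self ht
    have hbounds := hΦab.posDef_of_isRiccatiSolOn hA hB hQsymm hΦ hP htI
      (hP.isSymm hA hB hQsymm hΦ hs hPs htI)
    exact ⟨hbounds.1 ht.1, hbounds.2 ht.2⟩

theorem stmt_6 {n p : ℕ} (hn : 1 ≤ n) (hp : 1 ≤ p)
    (A Q : ℝ → Matrix (Fin n) (Fin n) ℝ) (B : ℝ → Matrix (Fin n) (Fin p) ℝ)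
    (hA : Continuous A) (hB : Continuous B) (hQ : Continuous Q)
    (hQpsd : ∀ t, (Q t).PosSemidef)
    (hAsm : ∀ i j, ContDiff ℝ (n - 1 : ℕ) fun t => A t i j)
    (hBsm : ∀ i j, ContDiff ℝ (n : ℕ) fun t => B t i j)
    (Γ : ℕ → ℝ → Matrix (Fin n) (Fin p) ℝ)
    (hΓ : IsCtrbMatSeq A B Γ)
    (hTC : TotallyControllable Γ)
    (Φ : ℝ → ℝ → Matrix (Fin n ⊕ Fin n) (Fin n ⊕ Fin n) ℝ)
    (hΦ : IsSTM (fun t => fromBlocks (A t) (-(B t * (B t)ᵀ)) (-(Q t)) (-(A t)ᵀ)) Φ)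
    (s : ℝ) (hs : s ∈ Set.Icc (0:ℝ) 1)
    (Ps : Matrix (Fin n) (Fin n) ℝ) (hPs : Psᵀ = Ps) :
    ((∃ P : ℝ → Matrix (Fin n) (Fin n) ℝ,
        P s = Ps ∧ IsRiccatiSolOn A Q B P (Set.Icc 0 1)) ↔
      ((0 < s → (Ps - -(((Φ 0 s).toBlocks₁₂)⁻¹ * (Φ 0 s).toBlocks₁₁)).PosDef) ∧
       (s < 1 → (-(((Φ 1 s).toBlocks₁₂)⁻¹ * (Φ 1 s).toBlocks₁₁) - Ps).PosDef))) ∧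
    ∀ P : ℝ → Matrix (Fin n) (Fin n) ℝ,
      P s = Ps → IsRiccatiSolOn A Q B P (Set.Icc 0 1) →
      (∀ t ∈ Set.Icc (0:ℝ) 1,
        P t = ((Φ t s).toBlocks₂₁ + (Φ t s).toBlocks₂₂ * Ps) *
          ((Φ t s).toBlocks₁₁ + (Φ t s).toBlocks₁₂ * Ps)⁻¹) ∧
      (∀ t ∈ Set.Ioo (0:ℝ) 1,
        (P t - -(((Φ 0 t).toBlocks₁₂)⁻¹ * (Φ 0 t).toBlocks₁₁)).PosDef ∧
        (-(((Φ 1 t).toBlocks₁₂)⁻¹ * (Φ 1 t).toBlocks₁₁) - P t).PosDef) := by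
  exact stmt_6_general hA hB hQpsd hΦ (hTC.isDisconjugateOn hΓ hA hB hQpsd hΦ) hs hPs
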